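/- For every g ≥ 1, the kernel of the ℂ-linear endomorphism of ℂ[α,β,γ]/J_g given by multiplication by β² − 64 has dimension g(g+1)/2 + δ, where δ = 1 if g ≡ 2 (mod 4) and δ = 0 otherwise. (Equivalently, the invariant part of the framed instanton homology I^#_inv(Σ_g × S¹)_w has dimension g(g+1) + 2δ.) -/

import Mathlib

open MvPolynomial

/-- ζ_k ∈ ℂ[α,β,γ] (variables: X 0 = α, X 1 = β, X 2 = γ). -/
noncomputable def zeta : ℕ → MvPolynomial (Fin 3) ℂ
  | 0 => 1
  | 1 => X 0
  | 2 => X 0 * zeta 1 + (X 1 - C 8) * zeta 0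
  | (n + 3) =>
      X 0 * zeta (n + 2)
        + C (((n : ℂ) + 2) ^ 2) * (X 1 + C ((-1) ^ (n + 2) * 8)) * zeta (n + 1)
        + C (2 * ((n : ℂ) + 2) * ((n : ℂ) + 1)) * X 2 * zeta n

/-- J_g = (ζ_g, ζ_{g+1}, ζ_{g+2}) ⊆ ℂ[α,β,γ]. -/
noncomputable def J (g : ℕ) : Ideal (MvPolynomial (Fin 3) ℂ) :=
  Ideal.span {zeta g, zeta (g + 1), zeta (g + 2)}

/-!
Since `β² - 64 = (β + 8)(β - 8)` with coprime factors, the kernel splits, and as `ℂ[α,β,γ]/J_g` is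
finite-dimensional, the kernel of `β - b` has the dimension of the quotient by the image of `J_g`
in `ℂ[α,γ]` under `β ↦ b`. At `b = ±8` every other coefficient `k²(b + (-1)ᵏ 8)` of the recursion
vanishes. If the one with index `g + 2` does, then `J_{g+2} = (ζ_{g+2}) + γ J_g`, and since
`ζ_{g+2}` is monic of degree `g + 2` in `α` modulo `γ`, the codimension grows by `g + 2`. This
settles the even `g` for `b = -8` and the odd `g` for `b = 8`.

For such `g`, compare `J_{g+1}` with `J_g`. If they differ, some `α - x` does not act surjectively
on `J_g / J_{g+1}`. Where `α` acts as `x`, the elements `γⁱ ζ_k` with `k + 2i ∈ {g, g + 1}`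
satisfy a linear recursion whose coefficients are positive up to powers of `x`, so that
`ζ_{g+1} = 0` forces `ζ_g = 0`. This gives `J_{g+1} = J_g` unless `b = 8`, `x = 0` and `g = 2M + 1` with `M`
even. In that case `α` and `γ` kill the class of `ζ_g`, which spans `J_g / J_{g+1}` and is not
zero: there is an odd `h ∈ ℂ[γ]` such that `α ↦ h(γ)` sends `J_{g+1}` into `(γ ^ (M + 2))`,
whereas `γ ^ (M + 1) ∈ J_g`.
-/

section Sequence

variable {R S : Type*} [CommRing R] [CommRing S]

/-- The sequence `ζ_k` with `ζ_{k+1} = a ζ_k + w_k ζ_{k-1} + 2k(k-1) t ζ_{k-2}`, for arbitrary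
weights `w` in place of `k²(β + (-1)ᵏ 8)`. In the last clause `n - 1` is truncated only at `n = 0`,
where its coefficient vanishes. -/
def zetaSeq (w : ℕ → R) (a t : R) : ℕ → R
  | 0 => 1
  | 1 => a
  | n + 2 => a * zetaSeq w a t (n + 1) + w (n + 1) * zetaSeq w a t n +
      (2 * (n + 1) * n : ℕ) * t * zetaSeq w a t (n - 1)

variable (w : ℕ → R) (a b t : R)

@[simp]
theorem zetaSeq_zero : zetaSeq w a t 0 = 1 := by rw [zetaSeq]

@[simp]
theorem zetaSeq_one : zetaSeq w a t 1 = a := by rw [zetaSeq]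

theorem zetaSeq_add_two (n : ℕ) :
    zetaSeq w a t (n + 2) = a * zetaSeq w a t (n + 1) + w (n + 1) * zetaSeq w a t n +
      (2 * (n + 1) * n : ℕ) * t * zetaSeq w a t (n - 1) := by
  rw [zetaSeq]

theorem zetaSeq_add_three (n : ℕ) :
    zetaSeq w a t (n + 3) = a * zetaSeq w a t (n + 2) + w (n + 2) * zetaSeq w a t (n + 1) +
      (2 * (n + 2) * (n + 1) : ℕ) * t * zetaSeq w a t n :=
  zetaSeq_add_two w a t (n + 1)

theorem map_zetaSeq (f : R →+* S) (k : ℕ) :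
    f (zetaSeq w a t k) = zetaSeq (fun i => f (w i)) (f a) (f t) k := by
  fun_induction zetaSeq w a t k with
  | case1 => simp
  | case2 => simp
  | case3 n ih₁ ih₀ ih =>
    simp only [zetaSeq_add_two, map_add, map_mul, map_natCast, ih₁, ih₀, ih]

theorem zetaSeq_neg_neg (k : ℕ) :
    zetaSeq w (-a) (-t) k = (-1) ^ k * zetaSeq w a t k := by
  fun_induction zetaSeq w a t k with
  | case1 => simp
  | case2 => simp
  | case3 n ih₁ ih₀ ih =>
    rw [zetaSeq_add_two, ih₁, ih₀, ih]
    rcases n with _ | n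
    · simp
    · simp only [Nat.add_sub_cancel, pow_succ]; ring

theorem sub_dvd_zetaSeq_sub (k : ℕ) : a - b ∣ zetaSeq w a t k - zetaSeq w b t k := by
  have hab : Ideal.Quotient.mk (Ideal.span {a - b}) a = Ideal.Quotient.mk _ b :=
    Ideal.Quotient.eq.2 (Ideal.mem_span_singleton_self _)
  rw [← Ideal.mem_span_singleton, ← Ideal.Quotient.eq, map_zetaSeq, map_zetaSeq, hab]

theorem monic_zetaSeq_X_and_natDegree [Nontrivial R] (k : ℕ) :
    (zetaSeq (fun i => Polynomial.C (w i)) Polynomial.X (Polynomial.C t) k).Monic ∧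
      (zetaSeq (fun i => Polynomial.C (w i)) Polynomial.X (Polynomial.C t) k).natDegree = k := by
  set z := zetaSeq (fun i => Polynomial.C (w i)) Polynomial.X (Polynomial.C t) with hz
  induction k using Nat.strong_induction_on with
  | h k ih => ?_
  rcases k with _ | _ | n
  · simp [hz, Polynomial.monic_one]
  · simp [hz, Polynomial.monic_X]
  · obtain ⟨hmonic, hdeg⟩ := ih (n + 1) (by lia)
    have hlower : (Polynomial.C (w (n + 1)) * z n +
        Polynomial.C ((2 * (n + 1) * n : ℕ) * t) * z (n - 1)).natDegree < n + 2 := by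
      refine (Polynomial.natDegree_add_le_of_degree_le (n := n)
        (Polynomial.natDegree_C_mul_le _ _ |>.trans (ih n (by lia)).2.le)
        (Polynomial.natDegree_C_mul_le _ _ |>.trans ?_)).trans_lt (by lia)
      rw [(ih (n - 1) (by lia)).2]; lia
    have hX := Polynomial.monic_X.mul hmonic
    have hXdeg : (Polynomial.X * z (n + 1)).natDegree = n + 2 := by
      rw [Polynomial.natDegree_X_mul hmonic.ne_zero, hdeg]
    have hstep : z (n + 2) = Polynomial.X * z (n + 1) + (Polynomial.C (w (n + 1)) * z n +
        Polynomial.C ((2 * (n + 1) * n : ℕ) * t) * z (n - 1)) := by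
      rw [hz, zetaSeq_add_two, map_mul, Polynomial.C_eq_natCast, add_assoc]
    have hlt := Polynomial.degree_lt_degree (hlower.trans_eq hXdeg.symm)
    rw [hstep]
    exact ⟨hX.add_of_left hlt, (Polynomial.natDegree_add_eq_left_of_degree_lt hlt).trans hXdeg⟩

end Sequence

section Ideal

variable {R S : Type*} [CommRing R] [CommRing S]

/-- The ideal `J_g = (ζ_g, ζ_{g+1}, ζ_{g+2})` of the sequence `zetaSeq w a t`. -/
def zetaIdeal (w : ℕ → R) (a t : R) (g : ℕ) : Ideal R :=
  Ideal.span {zetaSeq w a t g, zetaSeq w a t (g + 1), zetaSeq w a t (g + 2)}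

variable {w : ℕ → R} {a t : R}

theorem zetaIdeal_le_iff {g : ℕ} {I : Ideal R} :
    zetaIdeal w a t g ≤ I ↔
      zetaSeq w a t g ∈ I ∧ zetaSeq w a t (g + 1) ∈ I ∧ zetaSeq w a t (g + 2) ∈ I := by
  simp [zetaIdeal, Ideal.span_le, Set.insert_subset_iff]

theorem zetaSeq_mem_zetaIdeal {g k : ℕ} (h : g ≤ k) :
    zetaSeq w a t k ∈ zetaIdeal w a t g := by
  obtain ⟨h₀, h₁, h₂⟩ := zetaIdeal_le_iff.1 (le_refl (zetaIdeal w a t g))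
  obtain ⟨n, rfl⟩ := Nat.exists_eq_add_of_le h
  induction n using Nat.strong_induction_on with
  | h n ih => ?_
  rcases n with _ | _ | _ | n
  · exact h₀
  · exact h₁
  · exact h₂
  · rw [show g + (n + 3) = g + n + 3 by lia, zetaSeq_add_three]
    exact add_mem (add_mem (Ideal.mul_mem_left _ _ (ih (n + 2) (by lia) (by lia)))
      (Ideal.mul_mem_left _ _ (ih (n + 1) (by lia) (by lia))))
      (Ideal.mul_mem_left _ _ (ih n (by lia) (by lia)))

theorem zetaIdeal_anti {g k : ℕ} (h : g ≤ k) : zetaIdeal w a t k ≤ zetaIdeal w a t g :=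
  zetaIdeal_le_iff.2 ⟨zetaSeq_mem_zetaIdeal h, zetaSeq_mem_zetaIdeal (by lia),
    zetaSeq_mem_zetaIdeal (by lia)⟩

theorem zetaIdeal_zero : zetaIdeal w a t 0 = ⊤ :=
  (Ideal.eq_top_iff_one _).2 <| by
    simpa only [zetaSeq_zero] using zetaSeq_mem_zetaIdeal (w := w) (a := a) (t := t) (le_refl 0)

theorem map_zetaIdeal (f : R →+* S) (g : ℕ) :
    (zetaIdeal w a t g).map f = zetaIdeal (fun i => f (w i)) (f a) (f t) g := by
  simp only [zetaIdeal, Ideal.map_span, Set.image_insert_eq, Set.image_singleton, map_zetaSeq]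

theorem zetaIdeal_eq_span_sup (g : ℕ) :
    zetaIdeal w a t g = Ideal.span {zetaSeq w a t g} ⊔ zetaIdeal w a t (g + 1) := by
  refine le_antisymm (zetaIdeal_le_iff.2 ⟨?_, ?_, ?_⟩)
    (sup_le ((Ideal.span_singleton_le_iff_mem _).2 (zetaSeq_mem_zetaIdeal le_rfl))
      (zetaIdeal_anti g.le_succ))
  · exact Ideal.mem_sup_left (Ideal.mem_span_singleton_self _)
  · exact Ideal.mem_sup_right (zetaSeq_mem_zetaIdeal le_rfl)
  · exact Ideal.mem_sup_right (zetaSeq_mem_zetaIdeal (by lia))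

theorem zetaIdeal_succ_eq_of_mem {g : ℕ} (h : zetaSeq w a t g ∈ zetaIdeal w a t (g + 1)) :
    zetaIdeal w a t (g + 1) = zetaIdeal w a t g := by
  rw [zetaIdeal_eq_span_sup g, sup_eq_right.2 ((Ideal.span_singleton_le_iff_mem _).2 h)]

theorem span_singleton_mul_zetaIdeal_le_iff {g : ℕ} {b : R} {I : Ideal R} :
    Ideal.span {b} * zetaIdeal w a t g ≤ I ↔ b * zetaSeq w a t g ∈ I ∧
      b * zetaSeq w a t (g + 1) ∈ I ∧ b * zetaSeq w a t (g + 2) ∈ I := by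
  simp [zetaIdeal, Ideal.span_mul_span', Ideal.span_le, Set.insert_subset_iff]

variable [Algebra ℚ R]

theorem natCast_mul_mem_iff {I : Ideal R} {n : ℕ} (hn : n ≠ 0) {x : R} :
    (n : R) * x ∈ I ↔ x ∈ I := by
  refine Ideal.unit_mul_mem_iff_mem I ?_
  simpa using (isUnit_iff_ne_zero.2 (Nat.cast_ne_zero.2 hn : (n : ℚ) ≠ 0)).map (algebraMap ℚ R)

theorem mul_zetaSeq_mem {I : Ideal R} {n : ℕ}
    (h₁ : w (n + 2) * zetaSeq w a t (n + 1) ∈ I) (h₂ : zetaSeq w a t (n + 2) ∈ I)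
    (h₃ : zetaSeq w a t (n + 3) ∈ I) : t * zetaSeq w a t n ∈ I := by
  rw [← natCast_mul_mem_iff (n := 2 * (n + 2) * (n + 1)) (by positivity), ← mul_assoc]
  have h := sub_mem (sub_mem h₃ (I.mul_mem_left a h₂)) h₁
  rw [zetaSeq_add_three] at h
  convert h using 1
  ring

theorem span_singleton_mul_zetaIdeal_le_succ (g : ℕ) :
    Ideal.span {t} * zetaIdeal w a t g ≤ zetaIdeal w a t (g + 1) := by
  have hmem {k : ℕ} (hk : g + 1 ≤ k) := zetaSeq_mem_zetaIdeal (w := w) (a := a) (t := t) hk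
  exact span_singleton_mul_zetaIdeal_le_iff.2
    ⟨mul_zetaSeq_mem (Ideal.mul_mem_left _ _ (hmem le_rfl)) (hmem (by lia)) (hmem (by lia)),
      Ideal.mul_mem_left _ _ (hmem le_rfl), Ideal.mul_mem_left _ _ (hmem (by lia))⟩

theorem zetaIdeal_add_two_eq {g : ℕ} (hw : w (g + 2) = 0) :
    zetaIdeal w a t (g + 2) =
      Ideal.span {zetaSeq w a t (g + 2)} ⊔ Ideal.span {t} * zetaIdeal w a t g := by
  set I := Ideal.span {zetaSeq w a t (g + 2)} ⊔ Ideal.span {t} * zetaIdeal w a t g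
  have hmem {k : ℕ} (hk : g + 2 ≤ k) := zetaSeq_mem_zetaIdeal (w := w) (a := a) (t := t) hk
  have hI : zetaSeq w a t (g + 2) ∈ I := Ideal.mem_sup_left (Ideal.mem_span_singleton_self _)
  have ht (c : R) {k : ℕ} (hk : g ≤ k) : c * t * zetaSeq w a t k ∈ I := by
    rw [mul_assoc]
    exact I.mul_mem_left c <| Ideal.mem_sup_right <|
      Ideal.mul_mem_mul (Ideal.mem_span_singleton_self t) (zetaSeq_mem_zetaIdeal hk)
  have hI' : zetaSeq w a t (g + 3) ∈ I := by
    rw [zetaSeq_add_three, hw, zero_mul, add_zero]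
    exact add_mem (I.mul_mem_left _ hI) (ht _ le_rfl)
  have hI'' : zetaSeq w a t (g + 4) ∈ I := by
    rw [zetaSeq_add_three]
    exact add_mem (add_mem (I.mul_mem_left _ hI') (I.mul_mem_left _ hI)) (ht _ g.le_succ)
  refine le_antisymm (zetaIdeal_le_iff.2 ⟨hI, hI', hI''⟩) (sup_le
    ((Ideal.span_singleton_le_iff_mem _).2 (hmem le_rfl))
    (span_singleton_mul_zetaIdeal_le_iff.2 ⟨?_, ?_, Ideal.mul_mem_left _ _ (hmem le_rfl)⟩))
  · exact mul_zetaSeq_mem (by simp [hw]) (hmem le_rfl) (hmem (by lia))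
  · exact mul_zetaSeq_mem (Ideal.mul_mem_left _ _ (hmem le_rfl)) (hmem (by lia)) (hmem (by lia))

theorem zetaIdeal_one_eq (hw : w 1 = 0) :
    zetaIdeal w a t 1 = Ideal.span {zetaSeq w a t 1} ⊔ Ideal.span {t} * zetaIdeal w a t 0 := by
  rw [zetaIdeal_zero, Ideal.mul_top]
  set I := Ideal.span {zetaSeq w a t 1} ⊔ Ideal.span {t}
  have hmem {k : ℕ} (hk : 1 ≤ k) := zetaSeq_mem_zetaIdeal (w := w) (a := a) (t := t) hk
  have hI : zetaSeq w a t 1 ∈ I := Ideal.mem_sup_left (Ideal.mem_span_singleton_self _)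
  have hI' : zetaSeq w a t 2 ∈ I := by
    rw [zetaSeq_add_two, hw]
    simpa using I.mul_mem_left a hI
  have hI'' : zetaSeq w a t 3 ∈ I := by
    rw [zetaSeq_add_three, zetaSeq_zero, mul_one]
    exact add_mem (add_mem (I.mul_mem_left _ hI') (I.mul_mem_left _ hI)) <|
      I.mul_mem_left _ (Ideal.mem_sup_right (Ideal.mem_span_singleton_self t))
  refine le_antisymm (zetaIdeal_le_iff.2 ⟨hI, hI', hI''⟩) (sup_le
    ((Ideal.span_singleton_le_iff_mem _).2 (hmem le_rfl))
    ((Ideal.span_singleton_le_iff_mem _).2 ?_))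
  simpa using mul_zetaSeq_mem (Ideal.mul_mem_left _ _ (hmem le_rfl)) (hmem one_le_two)
    (hmem (k := 3) (by lia))

theorem pow_mul_zetaSeq_mem_zetaIdeal {ε : ℕ} (hε : ε ≤ 1) (hw : ∀ j, w (2 * j + ε) = 0)
    {i k m : ℕ} (h : 2 * m + ε ≤ k + 2 * i) :
    t ^ i * zetaSeq w a t k ∈ zetaIdeal w a t (2 * m + ε) := by
  induction i generalizing m with
  | zero => simpa using zetaSeq_mem_zetaIdeal (w := w) (a := a) (t := t) h
  | succ i ih =>
    rw [pow_succ', mul_assoc]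
    rcases m with _ | m
    · obtain rfl | rfl : ε = 0 ∨ ε = 1 := by lia
      · simp [zetaIdeal_zero]
      · rw [zetaIdeal_one_eq (hw 0), zetaIdeal_zero, Ideal.mul_top]
        exact Ideal.mem_sup_right (Ideal.mem_span_singleton.2 (dvd_mul_right _ _))
    · rw [show 2 * (m + 1) + ε = 2 * m + ε + 2 by ring] at h ⊢
      rw [zetaIdeal_add_two_eq (by rw [← hw (m + 1)]; ring_nf)]
      exact Ideal.mem_sup_right (Ideal.mul_mem_mul (Ideal.mem_span_singleton_self t) (ih (by lia)))

end Ideal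

section Chain

variable {K V : Type*} [Field K] [AddCommGroup V] [Module K V]

/-- The recursion satisfied by `f j = t ^ (M - j) * ζ_{2j+ε}` and `g j = t ^ (M - j) * ζ_{2j+ε+1}`
(with `d = ε + 1`) wherever `a` acts as the scalar `x` and `t ^ (M - j) * ζ_{2j+ε+2}` vanishes: the
two halves of the recursion of `zetaSeq`, for weights `c k²` and `0` alternating. -/
structure IsEigenChain (x c : K) (d M : ℕ) (f g : ℕ → V) : Prop where
  smul_add_smul_add_smul : ∀ j < M, x • g (j + 1) + (c * (2 * j + 2 + d) ^ 2) • f (j + 1) +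
    (2 * (2 * j + 2 + d) * (2 * j + 1 + d) : K) • g j = 0
  succ_eq : ∀ j < M, g (j + 1) = x • f (j + 1) + (2 * (2 * j + 1 + d) * (2 * j + d) : K) • f j

namespace IsEigenChain

variable {x c : K} {d M : ℕ} {f g : ℕ → V}

theorem tail (h : IsEigenChain x c d (M + 1) f g) :
    IsEigenChain x c (d + 2) M (fun j => f (j + 1)) (fun j => g (j + 1)) where
  smul_add_smul_add_smul j hj := by
    have := h.smul_add_smul_add_smul (j + 1) (by lia)
    push_cast at this ⊢
    linear_combination (norm := module) this
  succ_eq j hj := by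
    have := h.succ_eq (j + 1) (by lia)
    push_cast at this ⊢
    linear_combination (norm := module) this

variable [CharZero K]

theorem exists_pos_smul {y : K} (hy : y ≠ 0) (hd : 0 < d)
    (h : IsEigenChain (d * y) (-y ^ 2) d M f g) (hg : g 0 = (d * y) • f 0) {i : ℕ} (hi : i ≤ M) :
    ∃ p q : ℚ, 0 < p ∧ 0 < q ∧ y ^ i • f i = (p : K) • f 0 ∧ y ^ i • g i = (y * q) • f 0 := by
  induction i with
  | zero => exact ⟨1, d, one_pos, by positivity, by simp, by simp [hg, mul_comm]⟩
  | succ i ih =>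
    obtain ⟨p, q, hp, hq, hf, hg⟩ := ih (by lia)
    have h₁ := h.smul_add_smul_add_smul i hi
    have h₂ := h.succ_eq i hi
    set D : ℚ := (2 * i + 2) * (2 * i + 2 + 2 * d)
    have hD : 0 < D := by positivity
    set p' : ℚ := 2 * (2 * i + 1 + d) * (d * (2 * i + d) * p + (2 * i + 2 + d) * q) / D
    have hp'D : p' * D = 2 * (2 * i + 1 + d) * (d * (2 * i + d) * p + (2 * i + 2 + d) * q) :=
      div_mul_cancel₀ _ hD.ne'
    have hf' : y ^ (i + 1) • f (i + 1) = (p' : K) • f 0 := by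
      have hp'f : ((p' * D : ℚ) : K) • f 0 = _ := congrArg (fun r : ℚ => (r : K) • f 0) hp'D
      have hyD : y ^ 2 * (D : K) ≠ 0 :=
        mul_ne_zero (pow_ne_zero 2 hy) (Rat.cast_ne_zero.2 hD.ne')
      refine (smul_right_inj hyD).1 ?_
      linear_combination (norm := skip) -(y ^ (i + 1)) • h₁ + (d * y * y ^ (i + 1)) • h₂ +
        (d * y ^ 2 * (2 * (2 * i + 1 + d) * (2 * i + d) : K)) • hf +
        (y * (2 * (2 * i + 2 + d) * (2 * i + 1 + d) : K)) • hg - y ^ 2 • hp'f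
      simp only [D]
      push_cast
      module
    refine ⟨p', d * p' + 2 * (2 * i + 1 + d) * (2 * i + d) * p, by positivity, by positivity, hf',
      ?_⟩
    push_cast
    linear_combination (norm := (push_cast; module)) y ^ (i + 1) • h₂ + (d * y) • hf' +
      (y * (2 * (2 * i + 1 + d) * (2 * i + d) : K)) • hf

/-- With `x = d y` and `c = -y²`, all terms are positive rational multiples of `f 0`, up to powers
of `y`, unless `f 0 = 0`. -/
theorem eq_zero_of_last_eq_zero (hc : c ≠ 0) (hd : 0 < d) (h : IsEigenChain x c d M f g)
    (h₀ : x • g 0 + (c * d ^ 2) • f 0 = 0) (hg₀ : g 0 = x • f 0) (hgM : g M = 0) : f M = 0 := by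
  induction M generalizing d f g with
  | zero =>
    rw [hgM, smul_zero, zero_add] at h₀
    exact (smul_eq_zero_iff_right (mul_ne_zero hc (pow_ne_zero 2 (Nat.cast_ne_zero.2 hd.ne')))).1 h₀
  | succ M ih =>
    by_cases hf₀ : f 0 = 0
    · have h₁ := h.smul_add_smul_add_smul 0 M.succ_pos
      have h₂ := h.succ_eq 0 M.succ_pos
      simp only [hg₀, hf₀, smul_zero, add_zero, Nat.cast_zero, mul_zero, zero_add] at h₁ h₂
      exact ih (by lia) h.tail (by simpa [add_comm] using h₁) h₂ hgM
    · have hxc : x ^ 2 = -(c * d ^ 2) := by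
        rw [hg₀, smul_smul, ← add_smul, smul_eq_zero_iff_left hf₀] at h₀
        linear_combination h₀
      have hd' : (d : K) ≠ 0 := Nat.cast_ne_zero.2 hd.ne'
      obtain ⟨y, rfl⟩ : ∃ y, x = d * y := ⟨x / d, (mul_div_cancel₀ x hd').symm⟩
      obtain rfl : c = -y ^ 2 :=
        mul_right_cancel₀ (pow_ne_zero 2 hd') (by linear_combination hxc)
      have hy : y ≠ 0 := by rintro rfl; simp at hc
      obtain ⟨p, q, -, hq, -, hgq⟩ := h.exists_pos_smul hy hd hg₀ le_rfl
      rw [hgM, smul_zero, eq_comm, smul_eq_zero_iff_left hf₀] at hgq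
      exact absurd hgq (mul_ne_zero hy (Rat.cast_ne_zero.2 hq.ne'))

/-- For `x = 0` the relations link `f j` with `g (j + 1)` and `f (j + 1)` with `g j` only. -/
theorem zero_eq_zero_of_odd (hd : 0 < d) {i : ℕ}
    (h : IsEigenChain 0 c d (2 * i + 1) f g) (hg : g (2 * i + 1) = 0) : f 0 = 0 := by
  have hf {j : ℕ} (hj : j < 2 * i + 1) (hgj : g (j + 1) = 0) : f j = 0 := by
    have h₂ := h.succ_eq j hj
    rw [hgj, zero_smul, zero_add, eq_comm] at h₂
    refine (smul_eq_zero_iff_right ?_).1 h₂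
    norm_cast
    positivity
  have hg' {j : ℕ} (hj : j < 2 * i + 1) (hfj : f (j + 1) = 0) : g j = 0 := by
    have h₁ := h.smul_add_smul_add_smul j hj
    rw [hfj, zero_smul, smul_zero, zero_add, zero_add] at h₁
    refine (smul_eq_zero_iff_right ?_).1 h₁
    norm_cast
    positivity
  suffices ∀ l ≤ i, f (2 * (i - l)) = 0 by simpa using this i le_rfl
  intro l hl
  induction l with
  | zero => exact hf (by lia) hg
  | succ l ih =>
    have hfl := ih (by lia)
    rw [show 2 * (i - l) = 2 * (i - (l + 1)) + 1 + 1 by lia] at hfl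
    exact hf (by lia) (hg' (by lia) hfl)

end IsEigenChain

end Chain

section Membership

variable {K T : Type*} [Field K] [CommRing T] [Algebra K T]

/-- Weights that vanish at `k ≡ ε (mod 2)` and equal `c k²` at all other `k`. Those of the
sequence `ζ_k`, namely `k²(β + (-1)ᵏ 8)`, become of this kind at `β = ±8`. -/
def IsAlternating (c : K) (ε : ℕ) (w : ℕ → T) : Prop :=
  ∀ k, w k = algebraMap K T (if k % 2 = ε then 0 else c * k ^ 2)

namespace IsAlternating

variable {c : K} {ε : ℕ} {w : ℕ → T}

theorem apply_eq_zero (hw : IsAlternating c ε w) (hε : ε ≤ 1) (j : ℕ) : w (2 * j + ε) = 0 := by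
  rw [hw, if_pos (by lia), map_zero]

theorem apply_succ_eq (hw : IsAlternating c ε w) (j : ℕ) :
    w (2 * j + ε + 1) = algebraMap K T (c * (2 * j + ε + 1) ^ 2) := by
  rw [hw, if_neg (by lia)]
  push_cast
  rfl

theorem map {S : Type*} [CommRing S] [Algebra K S] (hw : IsAlternating c ε w) (φ : T →ₐ[K] S) :
    IsAlternating c ε (fun k => φ (w k)) := fun k => by
  simp only [hw k, φ.commutes]

theorem eq {w' : ℕ → T} (hw : IsAlternating c ε w) (hw' : IsAlternating c ε w') : w = w' :=
  funext fun k => (hw k).trans (hw' k).symm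

end IsAlternating

theorem mk_mul_eq_smul_mk {Q L : Ideal T} {a : T} {x : K}
    (h : Ideal.span {a - algebraMap K T x} * L ≤ Q) {y : T} (hy : y ∈ L) :
    Ideal.Quotient.mk Q (a * y) = x • Ideal.Quotient.mk Q y := by
  rw [Algebra.smul_def, ← Ideal.Quotient.mk_algebraMap, ← map_mul, Ideal.Quotient.eq, ← sub_mul]
  exact h (Ideal.mul_mem_mul (Ideal.mem_span_singleton_self _) hy)

theorem le_of_forall_le_sup_span_mul [IsAlgClosed K] {I L : Ideal T} {a : T}
    (ha : IsIntegral K (Ideal.Quotient.mk I a))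
    (h : ∀ x : K, L ≤ I ⊔ Ideal.span {a - algebraMap K T x} * L) : L ≤ I := by
  have hprod (s : Multiset K) :
      L ≤ I ⊔ Ideal.span {(s.map fun x => a - algebraMap K T x).prod} * L := by
    induction s using Multiset.induction with
    | empty => simp
    | cons x s ih =>
      rw [Multiset.map_cons, Multiset.prod_cons, ← Ideal.span_singleton_mul_span_singleton,
        mul_assoc]
      refine (h x).trans (sup_le le_sup_left ?_)
      calc Ideal.span {a - algebraMap K T x} * L
          ≤ Ideal.span {a - algebraMap K T x} *
              (I ⊔ Ideal.span {(s.map fun x => a - algebraMap K T x).prod} * L) :=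
            Ideal.mul_mono_right ih
        _ ≤ _ := by
            rw [Ideal.mul_sup]
            exact sup_le_sup_right Ideal.mul_le_right _
  set p := minpoly K (Ideal.Quotient.mk I a)
  have hroots : (p.roots.map fun x => a - algebraMap K T x).prod ∈ I := by
    rw [← Ideal.Quotient.eq_zero_iff_mem, map_multiset_prod, Multiset.map_map]
    have hp := (IsAlgClosed.splits p).eq_prod_roots_of_monic (minpoly.monic ha)
    have hp' := congrArg (Polynomial.aeval (Ideal.Quotient.mk I a)) hp
    rw [minpoly.aeval, map_multiset_prod, Multiset.map_map] at hp'
    simpa [Function.comp_def] using hp'.symm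
  exact (hprod p.roots).trans
    (sup_le le_rfl (Ideal.mul_le_left.trans ((Ideal.span_singleton_le_iff_mem _).2 hroots)))

variable [Algebra ℚ T] {c x : K} {ε M : ℕ} {w : ℕ → T} {a t : T} {Q : Ideal T}

theorem mk_pow_mul_mul_zetaSeq (hε : ε ≤ 1) (hw : IsAlternating c ε w)
    (ha : Ideal.span {a - algebraMap K T x} * zetaIdeal w a t (2 * M + ε) ≤ Q) {i k : ℕ}
    (h : 2 * M + ε ≤ k + 2 * i) :
    Ideal.Quotient.mk Q (t ^ i * (a * zetaSeq w a t k)) =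
      x • Ideal.Quotient.mk Q (t ^ i * zetaSeq w a t k) := by
  rw [mul_left_comm]
  exact mk_mul_eq_smul_mk ha (pow_mul_zetaSeq_mem_zetaIdeal hε (hw.apply_eq_zero hε) h)

theorem mk_pow_mul_zetaSeq_eq_zero (hε : ε ≤ 1) (hw : IsAlternating c ε w)
    (hQ : zetaIdeal w a t (2 * (M + 1) + ε) ≤ Q) {i k : ℕ} (h : 2 * (M + 1) + ε ≤ k + 2 * i) :
    Ideal.Quotient.mk Q (t ^ i * zetaSeq w a t k) = 0 :=
  Ideal.Quotient.eq_zero_iff_mem.2 (hQ (pow_mul_zetaSeq_mem_zetaIdeal hε (hw.apply_eq_zero hε) h))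

theorem isEigenChain_mk (hε : ε ≤ 1) (hw : IsAlternating c ε w)
    (hQ : zetaIdeal w a t (2 * (M + 1) + ε) ≤ Q)
    (ha : Ideal.span {a - algebraMap K T x} * zetaIdeal w a t (2 * M + ε) ≤ Q) :
    IsEigenChain x c (ε + 1) M
      (fun j => Ideal.Quotient.mk Q (t ^ (M - j) * zetaSeq w a t (2 * j + ε)))
      (fun j => Ideal.Quotient.mk Q (t ^ (M - j) * zetaSeq w a t (2 * j + ε + 1))) where
  smul_add_smul_add_smul j hj := by
    obtain ⟨i, rfl⟩ : ∃ i, M = j + 1 + i := ⟨M - (j + 1), by lia⟩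
    rw [← mk_pow_mul_mul_zetaSeq hε hw ha (by lia), add_tsub_cancel_left,
      show j + 1 + i - j = i + 1 by lia]
    have hlast := mk_pow_mul_zetaSeq_eq_zero hε hw hQ (i := i) (k := 2 * (j + 1) + ε + 2) (by lia)
    have hstep := zetaSeq_add_three w a t (2 * j + ε + 1)
    have hwj := hw.apply_succ_eq (j + 1)
    rw [show 2 * (j + 1) + ε + 1 = 2 * j + ε + 1 + 2 by ring] at hwj ⊢
    rw [hwj] at hstep
    simp only [Algebra.smul_def, ← Ideal.Quotient.mk_algebraMap, ← map_mul, ← map_add]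
    rw [← hlast, show 2 * (j + 1) + ε + 2 = 2 * j + ε + 1 + 3 by ring, hstep]
    congr 1
    push_cast [map_ofNat]
    ring_nf
  succ_eq j hj := by
    obtain ⟨i, rfl⟩ : ∃ i, M = j + 1 + i := ⟨M - (j + 1), by lia⟩
    rw [← mk_pow_mul_mul_zetaSeq hε hw ha (by lia), add_tsub_cancel_left,
      show j + 1 + i - j = i + 1 by lia]
    have hstep := zetaSeq_add_three w a t (2 * j + ε)
    have hwj := hw.apply_eq_zero hε (j + 1)
    rw [show 2 * (j + 1) + ε = 2 * j + ε + 2 by ring] at hwj ⊢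
    rw [hstep, hwj]
    simp only [Algebra.smul_def, ← Ideal.Quotient.mk_algebraMap, ← map_mul, ← map_add]
    congr 1
    push_cast [map_ofNat]
    ring

theorem mk_pow_mul_zetaSeq_succ (hε : ε ≤ 1) (hw : IsAlternating c ε w)
    (ha : Ideal.span {a - algebraMap K T x} * zetaIdeal w a t (2 * M + ε) ≤ Q) :
    Ideal.Quotient.mk Q (t ^ M * zetaSeq w a t (ε + 1)) =
      x • Ideal.Quotient.mk Q (t ^ M * zetaSeq w a t ε) := by
  rw [← mk_pow_mul_mul_zetaSeq hε hw ha (by lia)]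
  have hw0 := hw.apply_eq_zero hε 0
  obtain rfl | rfl : ε = 0 ∨ ε = 1 := by lia
  · simp
  · have hw1 : w 1 = 0 := hw0
    simp [zetaSeq_add_two, hw1]

theorem smul_mk_pow_mul_zetaSeq_add (hε : ε ≤ 1) (hw : IsAlternating c ε w)
    (hQ : zetaIdeal w a t (2 * (M + 1) + ε) ≤ Q)
    (ha : Ideal.span {a - algebraMap K T x} * zetaIdeal w a t (2 * M + ε) ≤ Q) :
    x • Ideal.Quotient.mk Q (t ^ M * zetaSeq w a t (ε + 1)) +
      (c * (ε + 1) ^ 2) • Ideal.Quotient.mk Q (t ^ M * zetaSeq w a t ε) +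
      (2 * (ε + 1) * ε : K) • Ideal.Quotient.mk Q (t ^ (M + 1)) = 0 := by
  rw [← mk_pow_mul_mul_zetaSeq hε hw ha (by lia),
    ← mk_pow_mul_zetaSeq_eq_zero hε hw hQ (i := M) (k := ε + 2) (by lia), zetaSeq_add_two]
  have hwε := hw.apply_succ_eq 0
  rw [mul_zero, zero_add] at hwε
  rw [hwε, show zetaSeq w a t (ε - 1) = 1 by simp [Nat.sub_eq_zero_of_le hε]]
  simp only [Algebra.smul_def, ← Ideal.Quotient.mk_algebraMap, ← map_mul, ← map_add]
  congr 1
  push_cast [map_ofNat]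
  ring

variable [CharZero K]

theorem pow_succ_mem_of_odd (hw : IsAlternating c 1 w) (hM : Odd M)
    (hQ : zetaIdeal w a t (2 * (M + 1) + 1) ≤ Q) (hlast : zetaSeq w a t (2 * M + 2) ∈ Q)
    (ha : Ideal.span {a - algebraMap K T x} * zetaIdeal w a t (2 * M + 1) ≤ Q) :
    t ^ (M + 1) ∈ Q := by
  rw [← Ideal.Quotient.eq_zero_iff_mem]
  rcases eq_or_ne x 0 with rfl | hx
  · obtain ⟨i, rfl⟩ := hM
    have hf := (isEigenChain_mk le_rfl hw hQ ha).zero_eq_zero_of_odd (by lia)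
      (by simpa [Ideal.Quotient.eq_zero_iff_mem] using hlast)
    have hbase := smul_mk_pow_mul_zetaSeq_add le_rfl hw hQ ha
    simp only [Nat.sub_zero, mul_zero, zero_add] at hf
    rw [hf, zero_smul, smul_zero, zero_add, zero_add] at hbase
    exact (smul_eq_zero_iff_right (by norm_num)).1 hbase
  · have hz := mk_pow_mul_mul_zetaSeq le_rfl hw ha (i := M + 1) (k := 0) (by lia)
    have hz' := mk_pow_mul_zetaSeq_eq_zero le_rfl hw hQ (i := M + 1) (k := 1) (by lia)
    rw [zetaSeq_zero, mul_one, mul_one] at hz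
    rw [zetaSeq_one, hz, smul_eq_zero_iff_right hx] at hz'
    exact hz'

theorem zetaSeq_mem_of_span_mul_le (hε : ε ≤ 1) (hc : c ≠ 0) (hw : IsAlternating c ε w)
    (hQ : zetaIdeal w a t (2 * M + ε + 1) ≤ Q)
    (ha : Ideal.span {a - algebraMap K T x} * zetaIdeal w a t (2 * M + ε) ≤ Q)
    (h : ε = 0 ∨ t ^ (M + 1) ∈ Q ∨ Odd M) : zetaSeq w a t (2 * M + ε) ∈ Q := by
  have hQ' : zetaIdeal w a t (2 * (M + 1) + ε) ≤ Q := (zetaIdeal_anti (by lia)).trans hQ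
  have hlast : zetaSeq w a t (2 * M + ε + 1) ∈ Q := hQ (zetaSeq_mem_zetaIdeal le_rfl)
  have ht : (2 * (ε + 1) * ε : K) • Ideal.Quotient.mk Q (t ^ (M + 1)) = 0 := by
    obtain rfl | rfl : ε = 0 ∨ ε = 1 := by lia
    · simp
    · rw [Ideal.Quotient.eq_zero_iff_mem.2, smul_zero]
      rcases h with h | h | hM
      · exact absurd h one_ne_zero
      · exact h
      · exact pow_succ_mem_of_odd hw hM hQ' hlast ha
  have hbase := smul_mk_pow_mul_zetaSeq_add hε hw hQ' ha
  rw [ht, add_zero] at hbase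
  have hchain := isEigenChain_mk hε hw hQ' ha
  have := hchain.eq_zero_of_last_eq_zero hc ε.succ_pos (by simpa using hbase)
    (by simpa using mk_pow_mul_zetaSeq_succ hε hw ha)
    (by simpa [Ideal.Quotient.eq_zero_iff_mem] using hlast)
  simpa [Ideal.Quotient.eq_zero_iff_mem] using this

theorem zetaSeq_mem_of_isIntegral [IsAlgClosed K] {I : Ideal T} (hε : ε ≤ 1) (hc : c ≠ 0)
    (hw : IsAlternating c ε w) (hI : zetaIdeal w a t (2 * M + ε + 1) ≤ I)
    (ha : IsIntegral K (Ideal.Quotient.mk I a)) (h : ε = 0 ∨ t ^ (M + 1) ∈ I ∨ Odd M) :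
    zetaSeq w a t (2 * M + ε) ∈ I := by
  refine le_of_forall_le_sup_span_mul ha (L := zetaIdeal w a t (2 * M + ε)) (fun x => ?_)
    (zetaSeq_mem_zetaIdeal le_rfl)
  set Q := I ⊔ Ideal.span {a - algebraMap K T x} * zetaIdeal w a t (2 * M + ε)
  have hIQ : I ≤ Q := le_sup_left
  rw [zetaIdeal_eq_span_sup, sup_le_iff, Ideal.span_singleton_le_iff_mem]
  exact ⟨zetaSeq_mem_of_span_mul_le hε hc hw (hI.trans hIQ) le_sup_right
    (h.imp_right (Or.imp_left (hIQ ·))), hI.trans hIQ⟩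

end Membership

section NonMembership

open scoped Polynomial Polynomial.Bivariate

variable {R : Type*} [CommRing R]

theorem zetaIdeal_one_le_span_of_dvd [Algebra ℚ R] {w : ℕ → R} {a t : R} (hw : w 1 = 0)
    (ha : t ∣ a) : zetaIdeal w a t 1 ≤ Ideal.span {t} := by
  rw [zetaIdeal_one_eq hw, zetaSeq_one]
  exact sup_le (Ideal.span_singleton_le_span_singleton.2 ha) Ideal.mul_le_left

theorem mul_dvd_zetaSeq_add_sub [Algebra ℚ R] {w : ℕ → R} {a t u : R} (hw : w 1 = 0)
    (ha : t ∣ a) (hu : t ∣ u) (j : ℕ) :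
    t * u ∣ zetaSeq w (a + u) t (2 * j + 1) - zetaSeq w a t (2 * j + 1) -
      (∏ i ∈ Finset.range j, w (2 * i + 2)) * u := by
  have hsub (k : ℕ) : u ∣ zetaSeq w (a + u) t k - zetaSeq w a t k := by
    simpa using sub_dvd_zetaSeq_sub w (a + u) a t k
  induction j with
  | zero => simp
  | succ j ih =>
    have ht : t ∣ zetaSeq w (a + u) t (2 * j + 2) := Ideal.mem_span_singleton.1 <|
      zetaIdeal_one_le_span_of_dvd hw (dvd_add ha hu) (zetaSeq_mem_zetaIdeal (by lia))
    have ha := mul_dvd_mul ha (hsub (2 * j + 2))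
    have hlast := (mul_dvd_mul_left t (hsub (2 * j))).mul_left
      ((2 * (2 * j + 2) * (2 * j + 1) : ℕ) : R)
    convert (((ih.mul_left (w (2 * j + 2))).add (mul_dvd_mul_right ht u)).add ha).add hlast using 1
    rw [show 2 * (j + 1) + 1 = 2 * j + 3 by ring, zetaSeq_add_three, zetaSeq_add_three,
      Finset.prod_range_succ]
    ring

variable {K : Type*} [Field K]

theorem coeff_eq_zero_of_comp_neg_X [CharZero K] {p : K[X]} {k n : ℕ}
    (hp : p.comp (-Polynomial.X) = (-1) ^ k * p) (hkn : Odd (k + n)) : p.coeff n = 0 := by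
  have hcoeff : (-1) ^ n * p.coeff n = (-1) ^ k * p.coeff n := by
    have h := congrArg (Polynomial.coeff · n) hp
    rw [show (-Polynomial.X : K[X]) = Polynomial.C (-1) * Polynomial.X by simp,
      show (-1 : K[X]) ^ k = Polynomial.C ((-1) ^ k) by simp] at h
    simpa only [Polynomial.comp_C_mul_X_coeff, Polynomial.coeff_C_mul, mul_comm (p.coeff n)] using h
  have hsign : (-1 : K) ^ n = -(-1) ^ k := by
    rw [Nat.odd_add, ← Nat.not_even_iff_odd] at hkn
    by_cases hn : Even n <;> simp_all
  rw [hsign, neg_mul, neg_eq_iff_add_eq_zero, ← two_mul] at hcoeff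
  simpa using hcoeff

theorem X_pow_succ_dvd_of_coeff_eq_zero {p : R[X]} {n : ℕ} (hp : Polynomial.X ^ n ∣ p)
    (h : p.coeff n = 0) : Polynomial.X ^ (n + 1) ∣ p := by
  rw [Polynomial.X_pow_dvd_iff] at hp ⊢
  intro d hd
  rcases Nat.lt_succ_iff_lt_or_eq.1 hd with hdn | rfl
  · exact hp d hdn
  · exact h

variable {c : K} {w : ℕ → K[X]}

theorem zetaSeq_comp_neg_X (hw : IsAlternating c 1 w) {h : K[X]}
    (hodd : h.comp (-Polynomial.X) = -h) (k : ℕ) :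
    (zetaSeq w h Polynomial.X k).comp (-Polynomial.X) =
      (-1) ^ k * zetaSeq w h Polynomial.X k := by
  rw [← zetaSeq_neg_neg, ← hodd, Polynomial.comp_eq_aeval, ← AlgHom.coe_toRingHom, map_zetaSeq]
  simp only [AlgHom.coe_toRingHom, Polynomial.aeval_X, ← Polynomial.comp_eq_aeval]
  congr 1
  exact (hw.map (Polynomial.aeval (-Polynomial.X))).eq hw

theorem zetaIdeal_le_of_sub_mem {w : ℕ → R} {a b t : R} {g : ℕ} {I : Ideal R}
    (h : zetaIdeal w a t g ≤ I) (hab : b - a ∈ I) : zetaIdeal w b t g ≤ I := by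
  have hmem {k : ℕ} (hk : g ≤ k) : zetaSeq w b t k ∈ I :=
    (Submodule.sub_mem_iff_left I (h (zetaSeq_mem_zetaIdeal hk))).1
      (I.mem_of_dvd (sub_dvd_zetaSeq_sub w b a t k) hab)
  exact zetaIdeal_le_iff.2 ⟨hmem le_rfl, hmem (by lia), hmem (by lia)⟩

variable [CharZero K]

theorem exists_prod_eq_C (hc : c ≠ 0) (hw : IsAlternating c 1 w) (n : ℕ) :
    ∃ D : K, D ≠ 0 ∧ ∏ i ∈ Finset.range n, w (2 * i + 2) = Polynomial.C D := by
  refine ⟨∏ i ∈ Finset.range n, c * (2 * i + (1 : ℕ) + 1) ^ 2, Finset.prod_ne_zero_iff.2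
    fun i _ => mul_ne_zero hc (pow_ne_zero 2 (by norm_cast)), ?_⟩
  rw [map_prod]
  exact Finset.prod_congr rfl fun i _ => hw.apply_succ_eq i

theorem exists_odd_X_pow_dvd_zetaSeq_add (hc : c ≠ 0) (hw : IsAlternating c 1 w) {h : K[X]}
    (hodd : h.comp (-Polynomial.X) = -h) (hX : Polynomial.X ∣ h) {M : ℕ}
    (hdvd : Polynomial.X ^ (M + 1) ∣ zetaSeq w h Polynomial.X (2 * (M + 1) + 1)) :
    ∃ u : K[X], u.comp (-Polynomial.X) = -u ∧ Polynomial.X ^ (M + 1) ∣ u ∧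
      Polynomial.X ^ (M + 2) ∣ zetaSeq w (h + u) Polynomial.X (2 * (M + 1) + 1) := by
  set z := zetaSeq w h Polynomial.X (2 * (M + 1) + 1) with hz
  obtain ⟨D, hD, hwD⟩ := exists_prod_eq_C hc hw (M + 1)
  set u : K[X] := Polynomial.C (-z.coeff (M + 1) / D) * Polynomial.X ^ (M + 1) with hu
  have hXu : Polynomial.X ^ (M + 1) ∣ u := dvd_mul_left _ _
  refine ⟨u, ?_, hXu, ?_⟩
  · rcases Nat.even_or_odd (M + 1) with hM | hM
    · have hb : z.coeff (M + 1) = 0 := coeff_eq_zero_of_comp_neg_X (zetaSeq_comp_neg_X hw hodd _)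
        (by rw [Nat.odd_add]; simp [hM])
      simp [hu, hb]
    · simp [hu, hM.neg_pow]
  · have hmain : Polynomial.X ^ (M + 2) ∣ z + Polynomial.C D * u := by
      refine X_pow_succ_dvd_of_coeff_eq_zero (dvd_add hdvd (hXu.mul_left _)) ?_
      rw [Polynomial.coeff_add, Polynomial.coeff_C_mul, hu, Polynomial.coeff_C_mul_X_pow,
        if_pos rfl]
      field_simp
      ring
    have herror := mul_dvd_zetaSeq_add_sub (hw.apply_eq_zero le_rfl 0) hX
      ((dvd_pow_self _ M.succ_ne_zero).trans hXu) (M + 1)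
    rw [hwD, ← hz, sub_sub] at herror
    rw [pow_succ'] at hmain ⊢
    exact (dvd_sub_left hmain).1 ((mul_dvd_mul_left _ hXu).trans herror)

/-- Each step kills one coefficient of `ζ_{2M+3}` by adding a multiple of `X ^ (M + 1)` to `h`. -/
theorem exists_odd_zetaIdeal_le_span_X_pow (hc : c ≠ 0) (hw : IsAlternating c 1 w) (M : ℕ) :
    ∃ h : K[X], h.comp (-Polynomial.X) = -h ∧ Polynomial.X ∣ h ∧
      zetaIdeal w h Polynomial.X (2 * M + 1) ≤ Ideal.span {Polynomial.X ^ (M + 1)} := by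
  induction M with
  | zero => exact ⟨0, by simp, dvd_zero _, by
      simpa using zetaIdeal_one_le_span_of_dvd (hw.apply_eq_zero le_rfl 0)
        (dvd_zero (Polynomial.X : K[X]))⟩
  | succ M ih =>
    obtain ⟨h, hodd, hX, hJ⟩ := ih
    obtain ⟨u, huodd, hXu, hzu⟩ := exists_odd_X_pow_dvd_zetaSeq_add hc hw hodd hX
      (Ideal.mem_span_singleton.1 (hJ (zetaSeq_mem_zetaIdeal (by lia))))
    refine ⟨h + u, by rw [Polynomial.add_comp, hodd, huodd, neg_add],
      dvd_add hX ((dvd_pow_self _ M.succ_ne_zero).trans hXu), ?_⟩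
    have hJu : zetaIdeal w (h + u) Polynomial.X (2 * M + 1) ≤ Ideal.span {Polynomial.X ^ (M + 1)} :=
      zetaIdeal_le_of_sub_mem hJ (by simpa [Ideal.mem_span_singleton] using hXu)
    rw [show 2 * (M + 1) + 1 = 2 * M + 1 + 2 by ring] at hzu ⊢
    rw [zetaIdeal_add_two_eq (g := 2 * M + 1) (hw.apply_eq_zero le_rfl (M + 1)), pow_succ',
      ← Ideal.span_singleton_mul_span_singleton]
    refine sup_le ?_ (Ideal.mul_mono_right hJu)
    rwa [Ideal.span_singleton_mul_span_singleton, ← pow_succ',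
      Ideal.span_singleton_le_span_singleton]

theorem zetaIdeal_le_span_X_pow_of_even (hw : IsAlternating c 1 w) {h : K[X]}
    (hodd : h.comp (-Polynomial.X) = -h) {M : ℕ} (hM : Even M)
    (hJ : zetaIdeal w h Polynomial.X (2 * M + 3) ≤ Ideal.span {Polynomial.X ^ (M + 2)}) :
    zetaIdeal w h Polynomial.X (2 * M + 2) ≤ Ideal.span {Polynomial.X ^ (M + 2)} := by
  have hz : Polynomial.X ^ (M + 1) ∣ zetaSeq w h Polynomial.X (2 * M + 2) := by
    have := hJ (span_singleton_mul_zetaIdeal_le_succ _ <| Ideal.mul_mem_mul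
      (Ideal.mem_span_singleton_self _) (zetaSeq_mem_zetaIdeal le_rfl))
    rwa [Ideal.mem_span_singleton, pow_succ', mul_dvd_mul_iff_left Polynomial.X_ne_zero] at this
  rw [zetaIdeal_eq_span_sup, sup_le_iff, Ideal.span_singleton_le_span_singleton]
  refine ⟨X_pow_succ_dvd_of_coeff_eq_zero hz ?_, hJ⟩
  exact coeff_eq_zero_of_comp_neg_X (zetaSeq_comp_neg_X hw hodd _)
    (by rw [Nat.odd_add']; simp [hM.add_one, Nat.even_add])

theorem zetaSeq_notMem_zetaIdeal_succ_of_even {w : ℕ → K[X][Y]} (hc : c ≠ 0)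
    (hw : IsAlternating c 1 w) {M : ℕ} (hM : Even M) :
    zetaSeq w (Polynomial.C Polynomial.X) Polynomial.X (2 * M + 1) ∉
      zetaIdeal w (Polynomial.C Polynomial.X) Polynomial.X (2 * M + 2) := by
  intro hmem
  have hpow : (Polynomial.X ^ (M + 1) : K[X][Y]) ∈
      zetaIdeal w (Polynomial.C Polynomial.X) Polynomial.X (2 * M + 2) := by
    rw [zetaIdeal_succ_eq_of_mem hmem]
    simpa using pow_mul_zetaSeq_mem_zetaIdeal le_rfl (hw.apply_eq_zero le_rfl) (k := 0)
      (i := M + 1) (m := M) (a := Polynomial.C Polynomial.X) (t := Polynomial.X) (by lia)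
  let w₁ : ℕ → K[X] := fun k => Polynomial.C (if k % 2 = 1 then 0 else c * k ^ 2)
  have hw₁ : IsAlternating c 1 w₁ := fun k => rfl
  obtain ⟨h, hodd, -, hJ⟩ := exists_odd_zetaIdeal_le_span_X_pow hc hw₁ (M + 1)
  let φ : K[X][Y] →ₐ[K] K[X] := Polynomial.aevalAeval h Polynomial.X
  have hφ := Ideal.mem_map_of_mem φ.toRingHom hpow
  rw [map_zetaIdeal] at hφ
  simp only [φ, AlgHom.toRingHom_eq_coe, RingHom.coe_coe, map_pow, Polynomial.aevalAeval_Y,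
    Polynomial.aevalAeval_C, Polynomial.aeval_X] at hφ
  rw [(hw.map _).eq hw₁] at hφ
  have hdvd := zetaIdeal_le_span_X_pow_of_even hw₁ hodd hM hJ hφ
  rw [Ideal.mem_span_singleton,
    pow_dvd_pow_iff Polynomial.X_ne_zero Polynomial.not_isUnit_X] at hdvd
  lia

end NonMembership

section Rank

open scoped Polynomial Polynomial.Bivariate

section Colon

variable {K A : Type*} [Field K] [CommRing A] [Algebra K A]

theorem rank_quotient_eq_add_rank_quotient_colon (I : Ideal A) (x : A) :
    Module.rank K (A ⧸ I) =
      Module.rank K (A ⧸ I ⊔ Ideal.span {x}) + Module.rank K (A ⧸ I.colon {x}) := by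
  let φ : (A ⧸ I.colon {x}) →ₗ[K] A ⧸ I :=
    (Submodule.mapQ (I.colon {x}) I (LinearMap.mulRight A x) fun _ hr =>
      Submodule.mem_colon_singleton.1 hr).restrictScalars K
  let π : (A ⧸ I) →ₗ[K] A ⧸ I ⊔ Ideal.span {x} :=
    (Ideal.Quotient.factorₐ K le_sup_left).toLinearMap
  have hφ : Function.Injective φ := by
    refine (injective_iff_map_eq_zero φ).2 fun q hq => ?_
    obtain ⟨r, rfl⟩ := Ideal.Quotient.mk_surjective q
    exact Ideal.Quotient.eq_zero_iff_mem.2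
      (Submodule.mem_colon_singleton.2 (Ideal.Quotient.eq_zero_iff_mem.1 hq))
  have hπ : Function.Surjective π := Ideal.Quotient.factor_surjective le_sup_left
  have hker : LinearMap.ker π = LinearMap.range φ := by
    ext q
    obtain ⟨r, rfl⟩ := Ideal.Quotient.mk_surjective q
    rw [LinearMap.mem_ker, LinearMap.mem_range]
    refine Ideal.Quotient.eq_zero_iff_mem.trans ⟨fun hr => ?_, ?_⟩
    · obtain ⟨s, i, hi, rfl⟩ := Ideal.mem_span_singleton_sup.1 (sup_comm I _ ▸ hr)
      exact ⟨Ideal.Quotient.mk _ s, Ideal.Quotient.eq.2 (by simpa using hi)⟩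
    · rintro ⟨s, hs⟩
      obtain ⟨s, rfl⟩ := Ideal.Quotient.mk_surjective s
      have hsr : s * x - r ∈ I := Ideal.Quotient.eq.1 hs
      rw [sup_comm, Ideal.mem_span_singleton_sup]
      exact ⟨s, r - s * x, by simpa using neg_mem hsr, by ring⟩
  rw [LinearMap.rank_eq_of_surjective hπ, hker, (LinearEquiv.ofInjective φ hφ).rank_eq]

theorem colon_span_sup_span_mul [IsDomain A] {x z : A} {I : Ideal A} (hx : Prime x)
    (hxz : ¬x ∣ z) (hz : z ∈ I) :
    (Ideal.span {z} ⊔ Ideal.span {x} * I).colon {x} = I := by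
  ext r
  rw [Submodule.mem_colon_singleton, smul_eq_mul, Ideal.mem_span_singleton_sup]
  constructor
  · rintro ⟨s, y, hy, h⟩
    obtain ⟨i, hi, rfl⟩ := Ideal.mem_span_singleton_mul.1 hy
    obtain ⟨s, rfl⟩ : x ∣ s := (hx.dvd_or_dvd ⟨r - i, by linear_combination h⟩).resolve_right hxz
    rw [show r = s * z + i from mul_left_cancel₀ hx.ne_zero (by linear_combination -h)]
    exact add_mem (I.mul_mem_left s hz) hi
  · exact fun hr => ⟨0, x * r, Ideal.mul_mem_mul (Ideal.mem_span_singleton_self x) hr, by ring⟩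

end Colon

variable {K : Type*} [Field K]

theorem rank_quotient_span_sup_span_X {z : K[X][Y]} (hz : (z.coeff 0).Monic) :
    Module.rank K (K[X][Y] ⧸ Ideal.span {z} ⊔ Ideal.span {Polynomial.X}) =
      (z.coeff 0).natDegree := by
  have hspan : Ideal.span {z} ⊔ Ideal.span {Polynomial.X} =
      Ideal.span {Polynomial.C (z.coeff 0), Polynomial.X - Polynomial.C 0} := by
    rw [map_zero, sub_zero, ← Ideal.span_pair_add_right_mul _ _ z.divX, add_comm,
      Polynomial.X_mul_divX_add, Ideal.span_insert]
  have e := ((Ideal.quotientEquivAlgOfEq K[X] hspan).trans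
    (Polynomial.quotientSpanCXSubCAlgEquiv (z.coeff 0) 0)).restrictScalars K
  have := hz.finite_quotient
  rw [← finrank_quotient_span_eq_natDegree (K := K), Module.finrank_eq_rank]
  exact e.toLinearEquiv.rank_eq

theorem rank_quotient_eq_one {P : Ideal K[X][Y]} (hP : P ≠ ⊤)
    (hX : Polynomial.C Polynomial.X ∈ P) (hY : Polynomial.X ∈ P) :
    Module.rank K (K[X][Y] ⧸ P) = 1 := by
  have : Nontrivial (K[X][Y] ⧸ P) := Ideal.Quotient.nontrivial_iff.2 hP
  refine (Subalgebra.bot_eq_top_iff_rank_eq_one (F := K) (E := K[X][Y] ⧸ P)).1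
    (top_le_iff.1 fun q _ => ?_)
  obtain ⟨p, rfl⟩ := Ideal.Quotient.mk_surjective q
  refine Algebra.mem_bot.2 ⟨(p.coeff 0).coeff 0, Ideal.Quotient.eq.2 ?_⟩
  have hp := P.mem_of_dvd (Polynomial.X_dvd_sub_C (p := p)) hY
  have hp₀ := P.mem_of_dvd (map_dvd Polynomial.C (Polynomial.X_dvd_sub_C (p := p.coeff 0))) hX
  convert neg_mem (add_mem hp hp₀) using 1
  simp

theorem rank_quotient_span_sup_span_X_mul {z : K[X][Y]} {I : Ideal K[X][Y]}
    (hz : (z.coeff 0).Monic) (hzI : z ∈ I) :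
    Module.rank K (K[X][Y] ⧸ Ideal.span {z} ⊔ Ideal.span {Polynomial.X} * I) =
      (z.coeff 0).natDegree + Module.rank K (K[X][Y] ⧸ I) := by
  have hle : Ideal.span {Polynomial.X} * I ≤ Ideal.span {Polynomial.X} := Ideal.mul_le_left
  rw [rank_quotient_eq_add_rank_quotient_colon _ Polynomial.X, sup_assoc, sup_eq_right.2 hle,
    rank_quotient_span_sup_span_X hz, colon_span_sup_span_mul Polynomial.prime_X
      (fun h => hz.ne_zero (Polynomial.X_dvd_iff.1 h)) hzI]

theorem monic_coeff_zero_zetaSeq_and_natDegree (v : ℕ → K) (k : ℕ) :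
    let z : K[X][Y] := zetaSeq (fun i => algebraMap K K[X][Y] (v i)) (Polynomial.C Polynomial.X)
      Polynomial.X k
    (z.coeff 0).Monic ∧ (z.coeff 0).natDegree = k := by
  intro z
  have hz : z.coeff 0 = zetaSeq (fun i => Polynomial.C (v i)) Polynomial.X (Polynomial.C 0) k := by
    rw [← Polynomial.constantCoeff_apply, map_zetaSeq]
    simp
  rw [hz]
  exact monic_zetaSeq_X_and_natDegree v 0 k

variable [CharZero K] {c : K} {ε : ℕ} {w : ℕ → K[X][Y]}

theorem rank_quotient_zetaIdeal_two_mul_add (hε : ε ≤ 1) (hw : IsAlternating c ε w) (m : ℕ) :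
    Module.rank K (K[X][Y] ⧸
      zetaIdeal w (Polynomial.C Polynomial.X) Polynomial.X (2 * m + ε)) =
      ((m + ε) * (m + 1) : ℕ) := by
  have hmonic (k : ℕ) := monic_coeff_zero_zetaSeq_and_natDegree
    (fun k => if k % 2 = ε then 0 else c * k ^ 2) k
  rw [← funext hw] at hmonic
  induction m with
  | zero =>
    interval_cases ε
    · simp [zetaIdeal_zero]
    · rw [zetaIdeal_one_eq (hw.apply_eq_zero le_rfl 0), rank_quotient_span_sup_span_X_mul
        (hmonic 1).1 (by simp [zetaIdeal_zero]), zetaIdeal_zero, (hmonic 1).2]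
      simp
  | succ m ih =>
    have hw₂ : w (2 * m + ε + 2) = 0 := by
      convert hw.apply_eq_zero hε (m + 1) using 2
      ring
    rw [show 2 * (m + 1) + ε = 2 * m + ε + 2 by ring, zetaIdeal_add_two_eq hw₂,
      rank_quotient_span_sup_span_X_mul (hmonic _).1 (zetaSeq_mem_zetaIdeal (by lia)), ih,
      (hmonic _).2]
    norm_cast
    ring

theorem isIntegral_mk_of_zetaIdeal_le (hε : ε ≤ 1) (hw : IsAlternating c ε w) {m : ℕ}
    {I : Ideal K[X][Y]}
    (hI : zetaIdeal w (Polynomial.C Polynomial.X) Polynomial.X (2 * m + ε) ≤ I) (p : K[X][Y]) :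
    IsIntegral K (Ideal.Quotient.mk I p) := by
  have := Module.finite_of_rank_eq_nat (rank_quotient_zetaIdeal_two_mul_add hε hw m)
  exact (Algebra.IsIntegral.isIntegral (R := K) (Ideal.Quotient.mk _ p)).map
    (Ideal.Quotient.factorₐ K hI)

variable [IsAlgClosed K]

theorem rank_quotient_zetaIdeal_of_isAlternating_zero (hc : c ≠ 0) (hw : IsAlternating c 0 w)
    (g : ℕ) :
    Module.rank K (K[X][Y] ⧸ zetaIdeal w (Polynomial.C Polynomial.X) Polynomial.X g) =
      (g / 2 * (g / 2 + 1) : ℕ) := by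
  have heven (m : ℕ) := rank_quotient_zetaIdeal_two_mul_add zero_le_one hw m
  rcases Nat.even_or_odd' g with ⟨m, rfl | rfl⟩
  · simpa using heven m
  · have hz := zetaSeq_mem_of_isIntegral (M := m) zero_le_one hc hw le_rfl
      (isIntegral_mk_of_zetaIdeal_le zero_le_one hw (m := m + 1) (zetaIdeal_anti (by lia))
        (Polynomial.C Polynomial.X)) (.inl rfl)
    rw [show (2 * m + 1) / 2 = m by lia, zetaIdeal_succ_eq_of_mem (g := 2 * m) hz]
    simpa using heven m

theorem C_X_mul_zetaSeq_mem_zetaIdeal (hc : c ≠ 0) (hw : IsAlternating c 1 w) (m : ℕ) :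
    Polynomial.C Polynomial.X * zetaSeq w (Polynomial.C Polynomial.X) Polynomial.X (2 * m + 1) ∈
      zetaIdeal w (Polynomial.C Polynomial.X) Polynomial.X (2 * m + 2) := by
  set a : K[X][Y] := Polynomial.C Polynomial.X
  set I := zetaIdeal w a Polynomial.X (2 * m + 2)
  have hle : zetaIdeal w a Polynomial.X (2 * (m + 1) + 1) ≤ I := zetaIdeal_anti (by lia)
  have hpow : (Polynomial.X : K[X][Y]) ^ (m + 1) * a ∈ I := by
    simpa using hle (pow_mul_zetaSeq_mem_zetaIdeal (k := 1) (i := m + 1) le_rfl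
      (hw.apply_eq_zero le_rfl) (by lia))
  rw [mul_comm, ← smul_eq_mul, ← Submodule.mem_colon_singleton]
  exact zetaSeq_mem_of_isIntegral le_rfl hc hw Ideal.le_colon
    (isIntegral_mk_of_zetaIdeal_le le_rfl hw (hle.trans Ideal.le_colon) a)
    (.inr (.inl (Submodule.mem_colon_singleton.2 hpow)))

theorem rank_quotient_zetaIdeal_two_mul_add_two (hc : c ≠ 0) (hw : IsAlternating c 1 w) (m : ℕ) :
    Module.rank K (K[X][Y] ⧸
      zetaIdeal w (Polynomial.C Polynomial.X) Polynomial.X (2 * m + 2)) =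
      ((m + 1) ^ 2 + if Even m then 1 else 0 : ℕ) := by
  have hodd := rank_quotient_zetaIdeal_two_mul_add le_rfl hw m
  set a : K[X][Y] := Polynomial.C Polynomial.X
  split_ifs with hm
  · set z := zetaSeq w a Polynomial.X (2 * m + 1)
    set I := zetaIdeal w a Polynomial.X (2 * m + 2)
    have hsup : I ⊔ Ideal.span {z} = zetaIdeal w a Polynomial.X (2 * m + 1) := by
      rw [sup_comm, ← zetaIdeal_eq_span_sup]
    have hcolon : Module.rank K (K[X][Y] ⧸ I.colon {z}) = 1 := by
      refine rank_quotient_eq_one ?_ ?_ ?_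
      · simpa using zetaSeq_notMem_zetaIdeal_succ_of_even hc hw hm
      · exact Submodule.mem_colon_singleton.2 (C_X_mul_zetaSeq_mem_zetaIdeal hc hw m)
      · exact Submodule.mem_colon_singleton.2 (span_singleton_mul_zetaIdeal_le_succ _ <|
          Ideal.mul_mem_mul (Ideal.mem_span_singleton_self _) (zetaSeq_mem_zetaIdeal le_rfl))
    rw [rank_quotient_eq_add_rank_quotient_colon I z, hsup, hodd, hcolon]
    norm_cast
    ring
  · have hz := zetaSeq_mem_of_isIntegral le_rfl hc hw le_rfl
      (isIntegral_mk_of_zetaIdeal_le le_rfl hw (m := m + 1) (zetaIdeal_anti (by lia)) a)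
      (.inr (.inr (Nat.not_even_iff_odd.1 hm)))
    rw [zetaIdeal_succ_eq_of_mem hz, hodd]
    ring_nf

theorem rank_quotient_zetaIdeal_of_isAlternating_one (hc : c ≠ 0) (hw : IsAlternating c 1 w)
    (g : ℕ) :
    Module.rank K (K[X][Y] ⧸ zetaIdeal w (Polynomial.C Polynomial.X) Polynomial.X g) =
      (((g + 1) / 2) ^ 2 + if g % 4 = 2 then 1 else 0 : ℕ) := by
  rcases Nat.even_or_odd' g with ⟨m, rfl | rfl⟩
  · rcases m with _ | m
    · simp [zetaIdeal_zero]
    · rw [Nat.mul_succ, rank_quotient_zetaIdeal_two_mul_add_two hc hw m,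
        show (2 * m + 2 + 1) / 2 = m + 1 by lia]
      simp only [Nat.even_iff, show (2 * m + 2) % 4 = 2 ↔ m % 2 = 0 by lia]
  · rw [rank_quotient_zetaIdeal_two_mul_add le_rfl hw m, if_neg (by lia),
      show (2 * m + 1 + 1) / 2 = m + 1 by lia, add_zero, sq]

end Rank

section Nilpotence

variable {R : Type*} [CommRing R] {w : ℕ → R} {a t : R}

theorem pow_mem_zetaIdeal [Algebra ℚ R] (g : ℕ) : t ^ g ∈ zetaIdeal w a t g := by
  induction g with
  | zero => simp [zetaIdeal_zero]
  | succ g ih =>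
    rw [pow_succ']
    exact span_singleton_mul_zetaIdeal_le_succ g
      (Ideal.mul_mem_mul (Ideal.mem_span_singleton_self t) ih)

theorem pow_mul_zetaSeq_mem_of_dvd {δ : R} {I : Ideal R} {g : ℕ} (hδ : ∀ k, w (k + 1) ∣ δ)
    (hI : zetaIdeal w a t g ≤ I) (ht : t ∈ I) {j k : ℕ} (h : g ≤ k + j) :
    δ ^ j * zetaSeq w a t k ∈ I := by
  induction j generalizing k with
  | zero => simpa using hI (zetaSeq_mem_zetaIdeal h)
  | succ j ih =>
    obtain ⟨q, hq⟩ := hδ k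
    have hstep : δ ^ (j + 1) * zetaSeq w a t k = q * (δ ^ j * zetaSeq w a t (k + 2)) -
        q * a * (δ ^ j * zetaSeq w a t (k + 1)) -
        q * δ ^ j * (2 * (k + 1) * k : ℕ) * zetaSeq w a t (k - 1) * t := by
      rw [zetaSeq_add_two, pow_succ]
      linear_combination δ ^ j * zetaSeq w a t k * hq
    rw [hstep]
    exact sub_mem (sub_mem (I.mul_mem_left _ (ih (by lia))) (I.mul_mem_left _ (ih (by lia))))
      (I.mul_mem_left _ ht)

theorem isNilpotent_mk_of_dvd [Algebra ℚ R] {δ : R} (hδ : ∀ k, w (k + 1) ∣ δ) (g : ℕ) :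
    IsNilpotent (Ideal.Quotient.mk (zetaIdeal w a t g) δ) := by
  set I := zetaIdeal w a t g
  have hδg : δ ^ g ∈ Ideal.span {t} ⊔ I := by
    simpa using pow_mul_zetaSeq_mem_of_dvd (k := 0) (j := g) hδ le_sup_right
      (Ideal.mem_sup_left (Ideal.mem_span_singleton_self t)) (by lia)
  obtain ⟨r, i, hi, h⟩ := Ideal.mem_span_singleton_sup.1 hδg
  refine ⟨g * g, ?_⟩
  rw [pow_mul, ← map_pow, ← h, map_add, Ideal.Quotient.eq_zero_iff_mem.2 hi, add_zero, ← map_pow,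
    Ideal.Quotient.eq_zero_iff_mem, mul_pow]
  exact I.mul_mem_left _ (pow_mem_zetaIdeal g)

theorem isIntegral_of_zetaSeq_eq_zero {S : Type*} [CommRing S] [Algebra S R] {g : ℕ}
    (hw : ∀ k, IsIntegral S (w k)) (ht : IsIntegral S t) (h : zetaSeq w a t g = 0) :
    IsIntegral S a := by
  nontriviality R
  let B := integralClosure S R
  let v : ℕ → B := fun k => ⟨w k, hw k⟩
  let s : B := ⟨t, ht⟩
  refine isIntegral_trans (A := B) a ⟨_, (monic_zetaSeq_X_and_natDegree v s g).1, ?_⟩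
  rw [← Polynomial.coe_eval₂RingHom, map_zetaSeq]
  simpa [v, s] using h

end Nilpotence

section Finiteness

theorem isIntegral_of_isNilpotent {K A : Type*} [CommRing K] [CommRing A] [Algebra K A] {x : A}
    (hx : IsNilpotent x) : IsIntegral K x := by
  obtain ⟨n, hn⟩ := hx
  exact .of_pow n.succ_pos (by simpa [pow_succ, hn] using isIntegral_zero)

theorem isIntegral_quotient_of_forall_X {σ K : Type*} [CommRing K] {I : Ideal (MvPolynomial σ K)}
    (h : ∀ i, IsIntegral K (Ideal.Quotient.mk I (X i))) :
    Algebra.IsIntegral K (MvPolynomial σ K ⧸ I) := by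
  refine ⟨fun q => ?_⟩
  obtain ⟨p, rfl⟩ := Ideal.Quotient.mk_surjective q
  induction p using MvPolynomial.induction_on with
  | C x => exact isIntegral_algebraMap
  | add p q hp hq => simpa using hp.add hq
  | mul_X p i hp => simpa using hp.mul (h i)

end Finiteness

section Kernel

variable {K A B : Type*} [Field K] [CommRing A] [Algebra K A] [CommRing B] [Algebra K B]

theorem finrank_ker_mulLeft_of_ker_eq_span [Module.Finite K A] {f : A →ₐ[K] B} {x : A}
    (hf : Function.Surjective f) (hx : RingHom.ker f = Ideal.span {x}) :
    Module.finrank K (LinearMap.ker (LinearMap.mulLeft K x)) = Module.finrank K B := by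
  have hrange : LinearMap.range (LinearMap.mulLeft K x) = LinearMap.ker f.toLinearMap := by
    ext y
    simpa [Ideal.mem_span_singleton, dvd_def, eq_comm] using (SetLike.ext_iff.1 hx y).symm
  have hmul := LinearMap.finrank_range_add_finrank_ker (LinearMap.mulLeft K x)
  have hquot := LinearMap.finrank_range_add_finrank_ker f.toLinearMap
  rw [LinearMap.range_eq_top.2 hf, finrank_top] at hquot
  rw [hrange] at hmul
  lia

theorem finrank_ker_mulLeft_mk {f : A →ₐ[K] B} {x : A} (hf : Function.Surjective f)
    (hx : RingHom.ker f = Ideal.span {x}) (I : Ideal A) [Module.Finite K (A ⧸ I)] :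
    Module.finrank K (LinearMap.ker (LinearMap.mulLeft K (Ideal.Quotient.mk I x))) =
      Module.finrank K (B ⧸ I.map f) := by
  refine finrank_ker_mulLeft_of_ker_eq_span
    (f := Ideal.quotientMapₐ (I.map f) f Ideal.le_comap_map) ?_ ?_
  · exact Ideal.quotientMap_surjective (H := Ideal.le_comap_map) hf
  · calc RingHom.ker (Ideal.quotientMapₐ (I.map f) f Ideal.le_comap_map)
        = ((I.map f).comap f).map (Ideal.Quotient.mk I) := by
          refine (Ideal.ker_quotient_lift _ _).trans ?_
          rw [← RingHom.comap_ker, Ideal.mk_ker]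
          rfl
      _ = Ideal.span {Ideal.Quotient.mk I x} := by
          rw [Ideal.comap_map_of_surjective f hf, ← RingHom.ker_eq_comap_bot, hx, Ideal.map_sup,
            Ideal.map_quotient_self, bot_sup_eq, Ideal.map_span, Set.image_singleton]

theorem finrank_ker_mulLeft_mul_of_isCoprime [Module.Finite K A] {x y : A} (h : IsCoprime x y) :
    Module.finrank K (LinearMap.ker (LinearMap.mulLeft K (x * y))) =
      Module.finrank K (LinearMap.ker (LinearMap.mulLeft K x)) +
        Module.finrank K (LinearMap.ker (LinearMap.mulLeft K y)) := by
  obtain ⟨u, v, huv⟩ := h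
  have hinf :
      LinearMap.ker (LinearMap.mulLeft K x) ⊓ LinearMap.ker (LinearMap.mulLeft K y) = ⊥ := by
    refine eq_bot_iff.2 fun z ⟨hxz, hyz⟩ => ?_
    rw [SetLike.mem_coe, LinearMap.mem_ker, LinearMap.mulLeft_apply] at hxz hyz
    rw [Submodule.mem_bot]
    linear_combination u * hxz + v * hyz - z * huv
  have hsup : LinearMap.ker (LinearMap.mulLeft K x) ⊔ LinearMap.ker (LinearMap.mulLeft K y) =
      LinearMap.ker (LinearMap.mulLeft K (x * y)) := by
    refine le_antisymm (sup_le (fun z hz => ?_) fun z hz => ?_) fun z hz => ?_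
    all_goals rw [LinearMap.mem_ker, LinearMap.mulLeft_apply] at hz
    · rw [LinearMap.mem_ker, LinearMap.mulLeft_apply]
      linear_combination y * hz
    · rw [LinearMap.mem_ker, LinearMap.mulLeft_apply]
      linear_combination x * hz
    · refine Submodule.mem_sup.2 ⟨v * y * z, ?_, u * x * z, ?_, by linear_combination z * huv⟩
      all_goals rw [LinearMap.mem_ker, LinearMap.mulLeft_apply]
      · linear_combination v * hz
      · linear_combination u * hz
  rw [← Submodule.finrank_sup_add_finrank_inf_eq, hinf, hsup, finrank_bot, add_zero]

end Kernel

section BetaWeight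

variable {A : Type*} [CommRing A]

/-- The coefficient `k² (b + (-1)ᵏ 8)` of `ζ_{k-1}` in the recursion for `ζ_{k+1}`, with `b` in the
role of `β`. -/
def betaWeight (b : A) (k : ℕ) : A :=
  k ^ 2 * (b + (-1) ^ k * 8)

theorem map_betaWeight {B : Type*} [CommRing B] (f : A →+* B) (b : A) (k : ℕ) :
    f (betaWeight b k) = betaWeight (f b) k := by
  simp [betaWeight, map_ofNat]

theorem isIntegral_betaWeight {S : Type*} [CommRing S] [Algebra S A] {b : A} (hb : IsIntegral S b)
    (k : ℕ) : IsIntegral S (betaWeight b k) :=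
  ((isIntegral_natCast k).pow 2).mul
    (hb.add ((isIntegral_one.neg.pow k).mul (isIntegral_natCast 8)))

theorem betaWeight_succ_dvd [Algebra ℚ A] (b : A) (k : ℕ) :
    betaWeight b (k + 1) ∣ b ^ 2 - 64 := by
  have hunit : IsUnit (((k + 1 : ℕ) : A) ^ 2) := by
    simpa using ((Nat.cast_add_one_ne_zero (R := ℚ) k).isUnit.map (algebraMap ℚ A)).pow 2
  refine hunit.mul_left_dvd.2 ⟨b - (-1) ^ (k + 1) * 8, ?_⟩
  have hsign : ((-1 : A) ^ (k + 1)) ^ 2 = 1 := by rw [← pow_mul, mul_comm, pow_mul]; simp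
  linear_combination 64 * hsign

theorem isAlternating_betaWeight_eight [Algebra ℂ A] :
    IsAlternating (16 : ℂ) 1 (betaWeight (algebraMap ℂ A 8)) := by
  refine fun k => (map_betaWeight (algebraMap ℂ A) 8 k).symm.trans (congrArg _ ?_)
  rcases Nat.mod_two_eq_zero_or_one k with hk | hk
  · rw [betaWeight, (Nat.even_iff.2 hk).neg_one_pow, if_neg (by lia)]
    ring
  · rw [betaWeight, (Nat.odd_iff.2 hk).neg_one_pow, if_pos hk]
    ring

theorem isAlternating_betaWeight_neg_eight [Algebra ℂ A] :
    IsAlternating (-16 : ℂ) 0 (betaWeight (algebraMap ℂ A (-8))) := by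
  refine fun k => (map_betaWeight (algebraMap ℂ A) (-8) k).symm.trans (congrArg _ ?_)
  rcases Nat.mod_two_eq_zero_or_one k with hk | hk
  · rw [betaWeight, (Nat.even_iff.2 hk).neg_one_pow, if_pos hk]
    ring
  · rw [betaWeight, (Nat.odd_iff.2 hk).neg_one_pow, if_neg (by lia)]
    ring

end BetaWeight

section Quotient

theorem zeta_eq_zetaSeq (k : ℕ) : zeta k = zetaSeq (betaWeight (X 1)) (X 0) (X 2) k := by
  fun_induction zeta k with
  | case1 => simp
  | case2 => simp
  | case3 ih₁ ih₀ => simp [zetaSeq_add_two, betaWeight, map_ofNat, ih₁, ih₀, sub_eq_add_neg]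
  | case4 n ih₂ ih₁ ih₀ => simp [zetaSeq_add_three, betaWeight, map_ofNat, ih₂, ih₁, ih₀]

theorem J_eq_zetaIdeal (g : ℕ) : J g = zetaIdeal (betaWeight (X 1)) (X 0) (X 2) g := by
  simp only [J, zetaIdeal, zeta_eq_zetaSeq]

theorem finite_quotient_J (g : ℕ) : Module.Finite ℂ (MvPolynomial (Fin 3) ℂ ⧸ J g) := by
  rw [J_eq_zetaIdeal]
  set I := zetaIdeal (betaWeight (X 1 : MvPolynomial (Fin 3) ℂ)) (X 0) (X 2) g
  let π := Ideal.Quotient.mk I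
  have hγ : IsIntegral ℂ (π (X 2)) :=
    isIntegral_of_isNilpotent
      ⟨g, by rw [← map_pow]; exact Ideal.Quotient.eq_zero_iff_mem.2 (pow_mem_zetaIdeal g)⟩
  have hβ : IsIntegral ℂ (π (X 1)) := by
    have hnil : IsIntegral ℂ (π (X 1 ^ 2 - 64)) :=
      isIntegral_of_isNilpotent (isNilpotent_mk_of_dvd (betaWeight_succ_dvd _) g)
    refine .of_pow two_pos ?_
    simpa [map_ofNat] using hnil.add (isIntegral_algebraMap (x := (64 : ℂ)))
  have hα : IsIntegral ℂ (π (X 0)) := by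
    refine isIntegral_of_zetaSeq_eq_zero (w := betaWeight (π (X 1))) (t := π (X 2)) (g := g)
      (isIntegral_betaWeight hβ) hγ ?_
    rw [← funext (map_betaWeight π (X 1)), ← map_zetaSeq]
    exact Ideal.Quotient.eq_zero_iff_mem.2 (zetaSeq_mem_zetaIdeal le_rfl)
  have : Algebra.IsIntegral ℂ (MvPolynomial (Fin 3) ℂ ⧸ I) :=
    isIntegral_quotient_of_forall_X fun i => by fin_cases i <;> assumption
  exact Algebra.IsIntegral.finite

end Quotient

section Specialization

open scoped Polynomial Polynomial.Bivariate

/-- The specialisation `ℂ[α, β, γ] → ℂ[α][γ]` at `β = b`. -/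
noncomputable def specBeta (b : ℂ) : MvPolynomial (Fin 3) ℂ →ₐ[ℂ] ℂ[X][Y] :=
  aeval ![Polynomial.C Polynomial.X, algebraMap ℂ ℂ[X][Y] b, Polynomial.X]

theorem specBeta_surjective (b : ℂ) : Function.Surjective (specBeta b) := by
  have hright : (specBeta b).comp (Polynomial.aevalAeval (X 0) (X 2)) = AlgHom.id ℂ ℂ[X][Y] := by
    ext <;> simp [specBeta]
  exact fun p => ⟨_, DFunLike.congr_fun hright p⟩

theorem ker_specBeta (b : ℂ) : RingHom.ker (specBeta b) = Ideal.span {X 1 - C b} := by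
  refine le_antisymm (fun p hp => ?_) ?_
  · let π := Ideal.Quotient.mkₐ ℂ (Ideal.span {(X 1 - C b : MvPolynomial (Fin 3) ℂ)})
    have hβ : π (X 1) = algebraMap ℂ _ b :=
      (Ideal.Quotient.eq.2 (Ideal.mem_span_singleton_self _)).trans (π.commutes b)
    have hfactor : π = (π.comp (Polynomial.aevalAeval (X 0) (X 2))).comp (specBeta b) := by
      ext i
      fin_cases i <;> simp [specBeta, hβ]
    refine Ideal.Quotient.eq_zero_iff_mem.1 ((DFunLike.congr_fun hfactor p).trans ?_)
    simp [RingHom.mem_ker.1 hp]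
  · simp [RingHom.mem_ker, specBeta]

theorem map_specBeta_J (b : ℂ) (g : ℕ) :
    (J g).map (specBeta b) = zetaIdeal (betaWeight (algebraMap ℂ ℂ[X][Y] b))
      (Polynomial.C Polynomial.X) Polynomial.X g := by
  rw [J_eq_zetaIdeal]
  refine (map_zetaIdeal (specBeta b : MvPolynomial (Fin 3) ℂ →+* ℂ[X][Y]) g).trans ?_
  simp [map_betaWeight, specBeta]

theorem finrank_ker_mulLeft_mk_X_one_sub_C (b : ℂ) (g : ℕ) :
    Module.finrank ℂ
        (LinearMap.ker (LinearMap.mulLeft ℂ (Ideal.Quotient.mk (J g) (X 1 - C b)))) =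
      Module.finrank ℂ (ℂ[X][Y] ⧸ zetaIdeal (betaWeight (algebraMap ℂ ℂ[X][Y] b))
        (Polynomial.C Polynomial.X) Polynomial.X g) := by
  have := finite_quotient_J g
  rw [← map_specBeta_J]
  exact finrank_ker_mulLeft_mk (specBeta_surjective b) (ker_specBeta b) (J g)

end Specialization

theorem half_mul_add_sq_half_succ (g : ℕ) :
    g / 2 * (g / 2 + 1) + ((g + 1) / 2) ^ 2 = g * (g + 1) / 2 := by
  obtain ⟨m, rfl | rfl⟩ := Nat.even_or_odd' g
  · rw [show 2 * m / 2 = m by lia, show (2 * m + 1) / 2 = m by lia, mul_assoc,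
      Nat.mul_div_cancel_left _ two_pos]
    ring
  · rw [show (2 * m + 1) / 2 = m by lia, show (2 * m + 1 + 1) / 2 = m + 1 by lia,
      show (2 * m + 1) * (2 * m + 1 + 1) = 2 * ((2 * m + 1) * (m + 1)) by ring,
      Nat.mul_div_cancel_left _ two_pos]
    ring

/-- For g ≥ 1, the kernel of multiplication by β² − 64 on ℂ[α,β,γ]/J_g has dimension
    g(g+1)/2 + δ, where δ = 1 if g ≡ 2 (mod 4) and δ = 0 otherwise. -/
theorem dim_ker_mul_betaSq_sub (g : ℕ) (hg : 1 ≤ g) :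
    Module.finrank ℂ
        (LinearMap.ker (LinearMap.mulLeft ℂ
          (Ideal.Quotient.mk (J g) ((X 1 : MvPolynomial (Fin 3) ℂ) ^ 2 - 64))))
      = g * (g + 1) / 2 + (if g % 4 = 2 then 1 else 0) := by
  have := finite_quotient_J g
  have hfactor : (X 1 ^ 2 - 64 : MvPolynomial (Fin 3) ℂ) = (X 1 - C (-8)) * (X 1 - C 8) := by
    rw [map_neg, map_ofNat]
    ring
  have hcoprime : IsCoprime (X 1 - C (-8)) (X 1 - C 8 : MvPolynomial (Fin 3) ℂ) := by
    refine ⟨C (1 / 16), -C (1 / 16), ?_⟩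
    rw [neg_mul, ← sub_eq_add_neg, ← mul_sub, sub_sub_sub_cancel_left, ← map_sub, ← map_mul]
    norm_num
  rw [hfactor, map_mul, finrank_ker_mulLeft_mul_of_isCoprime (hcoprime.map _),
    finrank_ker_mulLeft_mk_X_one_sub_C, finrank_ker_mulLeft_mk_X_one_sub_C,
    Module.finrank_eq_of_rank_eq (rank_quotient_zetaIdeal_of_isAlternating_zero (by simp)
      isAlternating_betaWeight_neg_eight g),
    Module.finrank_eq_of_rank_eq (rank_quotient_zetaIdeal_of_isAlternating_one (by simp)
      isAlternating_betaWeight_eight g),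
    ← add_assoc, half_mul_add_sq_half_succ]
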